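/- arXiv:1802.04411 — 5 statements merged into one kernel-verified Lean document; each statement's English description precedes it below -/
import Mathlib

section
/- There exists an absolute constant c₁ > 0 such that the following holds: for every β with 0 < β ≤ 2, every probability space (Ω, μ), and every random variable g : Ω → ℝ with E|g|² < ∞, one has E|g − E g|² ≥ c₁ · E|g|² − 2^{1/β} · |E[|g|^β · sgn(g)]|^{2/β}. -/
open MeasureTheory Real

/-! If `g` is `L²`-close to a constant `a ≠ 0`, then `g / a` is close to `1`, and integrating a
quadratic minorant of `t ↦ |t| ^ β * sign t`, valid on all of `ℝ` because `β ≤ 2`, shows that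
`|E[|g| ^ β * sign g]|` is at least a fixed multiple of `|a / 2| ^ β`, so that the subtracted term
dominates `a ^ 2`. Otherwise `E[(g - a) ^ 2]` itself dominates `a ^ 2`. Either way the claim follows
from `g ^ 2 ≤ 2 * (g - a) ^ 2 + 2 * a ^ 2`; the mean of `g` is one choice of `a`. -/

theorem sq_le_rpow_mul_rpow_of_rpow_sq_le {β c x y : ℝ} (hβ : 0 < β) (hc : 0 ≤ c)
    (hx : 0 ≤ x) (hy : 0 ≤ y) (h : (x ^ β) ^ 2 ≤ c * y ^ 2) : x ^ 2 ≤ c ^ (1 / β) * y ^ (2 / β) :=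
  calc x ^ 2 = ((x ^ β) ^ 2) ^ (1 / β) := by
        rw [rpow_pow_comm hx, one_div, rpow_rpow_inv (sq_nonneg x) hβ.ne']
    _ ≤ (c * y ^ 2) ^ (1 / β) := rpow_le_rpow (by positivity) h (by positivity)
    _ = c ^ (1 / β) * y ^ (2 / β) := by
        rw [mul_rpow hc (sq_nonneg y), ← rpow_two, ← rpow_mul hy, mul_one_div]

theorem real_sign_mul (x y : ℝ) : sign (x * y) = sign x * sign y := by
  rcases lt_trichotomy x 0 with hx | rfl | hx <;> rcases lt_trichotomy y 0 with hy | rfl | hy <;>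
    simp [sign_of_neg, sign_of_pos, mul_pos_of_neg_of_neg, mul_neg_of_neg_of_pos,
      mul_neg_of_pos_of_neg, *]

theorem measurable_real_sign : Measurable sign :=
  .ite measurableSet_Iio measurable_const (.ite measurableSet_Ioi measurable_const measurable_const)

/-- The signed power `|x| ^ β * sgn x`, the odd extension to `ℝ` of `x ↦ x ^ β` on the positive
half-line, whose integral appears in the inequality. Its value at `0` is `0`, even for `β = 0`. -/
noncomputable def signedRpow (β x : ℝ) : ℝ := |x| ^ β * sign x

section SignedRpow

variable {β x : ℝ}

theorem signedRpow_of_pos (hx : 0 < x) : signedRpow β x = x ^ β := by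
  rw [signedRpow, abs_of_pos hx, sign_of_pos hx, mul_one]

theorem signedRpow_mul (β x y : ℝ) :
    signedRpow β (x * y) = signedRpow β x * signedRpow β y := by
  simp only [signedRpow, abs_mul, mul_rpow (abs_nonneg x) (abs_nonneg y), real_sign_mul,
    mul_mul_mul_comm]

theorem abs_signedRpow (hx : x ≠ 0) : |signedRpow β x| = |x| ^ β := by
  rcases sign_apply_eq_of_ne_zero x hx with h | h <;>
    simp [signedRpow, h, abs_of_nonneg (rpow_nonneg (abs_nonneg x) β)]

theorem abs_signedRpow_le (β x : ℝ) : |signedRpow β x| ≤ |x| ^ β := by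
  rcases eq_or_ne x 0 with rfl | hx
  · simpa [signedRpow] using rpow_nonneg le_rfl β
  · exact (abs_signedRpow hx).le

theorem measurable_signedRpow (β : ℝ) : Measurable (signedRpow β) :=
  (measurable_id.abs.pow_const β).mul measurable_real_sign

theorem half_rpow_mul_one_sub_le_signedRpow (hβ : 0 ≤ β) (hβ₂ : β ≤ 2) (t : ℝ) :
    (1 / 2) ^ β * (1 - 5 * (t - 1) ^ 2) ≤ signedRpow β t := by
  have half_pos : (0 : ℝ) < (1 / 2) ^ β := by positivity
  rcases le_or_gt t 0 with ht | ht
  · have quarter_le : (1 / 4 : ℝ) ≤ (1 / 2) ^ β :=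
      calc (1 / 4 : ℝ) = (1 / 2) ^ (2 : ℝ) := by norm_num
        _ ≤ (1 / 2) ^ β := rpow_le_rpow_of_exponent_ge (by norm_num) (by norm_num) hβ₂
    have abs_rpow_le : |t| ^ β ≤ (t - 1) ^ 2 :=
      calc |t| ^ β ≤ (1 - t) ^ β :=
            rpow_le_rpow (abs_nonneg t) (by rw [abs_of_nonpos ht]; linarith) hβ
        _ ≤ (1 - t) ^ (2 : ℝ) := rpow_le_rpow_of_exponent_le (by linarith) hβ₂
        _ = (t - 1) ^ 2 := by rw [rpow_two]; ring
    have one_le : 1 ≤ (t - 1) ^ 2 := by nlinarith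
    calc (1 / 2) ^ β * (1 - 5 * (t - 1) ^ 2)
        ≤ 1 / 4 * (1 - 5 * (t - 1) ^ 2) :=
          mul_le_mul_of_nonpos_right quarter_le (by linarith)
      _ ≤ -|t| ^ β := by linarith
      _ ≤ signedRpow β t := neg_le_of_abs_le (abs_signedRpow_le β t)
  · rw [signedRpow_of_pos ht]
    rcases le_total t (1 / 2) with ht₂ | ht₂
    · have bracket_nonpos : 1 - 5 * (t - 1) ^ 2 ≤ 0 := by nlinarith
      exact (mul_nonpos_of_nonneg_of_nonpos half_pos.le bracket_nonpos).trans
        (rpow_nonneg ht.le β)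
    · calc (1 / 2) ^ β * (1 - 5 * (t - 1) ^ 2)
          ≤ (1 / 2) ^ β := mul_le_of_le_one_right half_pos.le (by nlinarith)
        _ ≤ t ^ β := rpow_le_rpow (by norm_num) ht₂ hβ

end SignedRpow

section Integral

variable {Ω : Type*} [MeasurableSpace Ω] {μ : Measure Ω} {β : ℝ} {g : Ω → ℝ}

theorem integrable_signedRpow (hβ : 0 < β) (hg : MemLp g (ENNReal.ofReal β) μ) :
    Integrable (fun ω ↦ signedRpow β (g ω)) μ := by
  have integrable_rpow : Integrable (fun ω ↦ ‖g ω‖ ^ β) μ := by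
    simpa only [ENNReal.toReal_ofReal hβ.le] using
      hg.integrable_norm_rpow (ENNReal.ofReal_pos.2 hβ).ne' ENNReal.ofReal_ne_top
  exact integrable_rpow.mono'
    ((measurable_signedRpow β).comp_aemeasurable hg.aemeasurable).aestronglyMeasurable
    (.of_forall fun ω ↦ abs_signedRpow_le β (g ω))

variable [IsProbabilityMeasure μ]

theorem integral_sq_le_two_mul_integral_sub_sq_add (hg : MemLp g 2 μ)
    (a : ℝ) : ∫ ω, g ω ^ 2 ∂μ ≤ 2 * ∫ ω, (g ω - a) ^ 2 ∂μ + 2 * a ^ 2 := by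
  have integrable_sub_sq : Integrable (fun ω ↦ 2 * (g ω - a) ^ 2) μ :=
    (hg.sub (memLp_const a)).integrable_sq.const_mul 2
  calc ∫ ω, g ω ^ 2 ∂μ ≤ ∫ ω, (2 * (g ω - a) ^ 2 + 2 * a ^ 2) ∂μ :=
        integral_mono hg.integrable_sq (integrable_sub_sq.add (integrable_const _))
          fun ω ↦ by nlinarith [sq_nonneg (g ω - 2 * a)]
    _ = 2 * ∫ ω, (g ω - a) ^ 2 ∂μ + 2 * a ^ 2 := by
        rw [integral_add integrable_sub_sq (integrable_const _), integral_const_mul,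
          integral_const, probReal_univ, one_smul]

theorem half_rpow_mul_one_sub_integral_le_integral_signedRpow (hβ : 0 < β) (hβ₂ : β ≤ 2)
    (hg : MemLp g 2 μ) :
    (1 / 2) ^ β * (1 - 5 * ∫ ω, (g ω - 1) ^ 2 ∂μ) ≤ ∫ ω, signedRpow β (g ω) ∂μ := by
  have integrable_sub_sq : Integrable (fun ω ↦ 5 * (g ω - 1) ^ 2) μ :=
    (hg.sub (memLp_const 1)).integrable_sq.const_mul 5
  have memLp_β : MemLp g (ENNReal.ofReal β) μ :=
    hg.mono_exponent (ENNReal.ofReal_le_ofNat.2 hβ₂)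
  calc (1 / 2) ^ β * (1 - 5 * ∫ ω, (g ω - 1) ^ 2 ∂μ)
      = ∫ ω, (1 / 2) ^ β * (1 - 5 * (g ω - 1) ^ 2) ∂μ := by
        rw [integral_const_mul, integral_sub (integrable_const _) integrable_sub_sq,
          integral_const_mul, integral_const, probReal_univ, one_smul]
    _ ≤ ∫ ω, signedRpow β (g ω) ∂μ :=
        integral_mono (((integrable_const _).sub integrable_sub_sq).const_mul _)
          (integrable_signedRpow hβ memLp_β)
          fun ω ↦ half_rpow_mul_one_sub_le_signedRpow hβ.le hβ₂ (g ω)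

theorem abs_half_rpow_mul_one_sub_le_abs_integral_signedRpow {a : ℝ} (ha : a ≠ 0) (hβ : 0 < β)
    (hβ₂ : β ≤ 2) (hg : MemLp g 2 μ) :
    |a / 2| ^ β * (1 - 5 * ((∫ ω, (g ω - a) ^ 2 ∂μ) / a ^ 2)) ≤
      |∫ ω, signedRpow β (g ω) ∂μ| := by
  have memLp_div : MemLp (fun ω ↦ g ω / a) 2 μ := by
    simpa only [div_eq_mul_inv] using hg.mul_const a⁻¹
  have integral_div_sub_sq :
      ∫ ω, (g ω / a - 1) ^ 2 ∂μ = (∫ ω, (g ω - a) ^ 2 ∂μ) / a ^ 2 := by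
    rw [← integral_div]
    congr with ω
    rw [div_sub_one ha, div_pow]
  have integral_eq : ∫ ω, signedRpow β (g ω) ∂μ =
      signedRpow β a * ∫ ω, signedRpow β (g ω / a) ∂μ := by
    simp_rw [← integral_const_mul, ← signedRpow_mul, mul_div_cancel₀ _ ha]
  calc |a / 2| ^ β * (1 - 5 * ((∫ ω, (g ω - a) ^ 2 ∂μ) / a ^ 2))
      = |a| ^ β * ((1 / 2) ^ β * (1 - 5 * ∫ ω, (g ω / a - 1) ^ 2 ∂μ)) := by
        rw [integral_div_sub_sq, ← mul_assoc, ← mul_rpow (abs_nonneg a) (by norm_num), abs_div,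
          abs_two, mul_one_div]
    _ ≤ |a| ^ β * |∫ ω, signedRpow β (g ω / a) ∂μ| := by
        gcongr
        exact (half_rpow_mul_one_sub_integral_le_integral_signedRpow hβ hβ₂ memLp_div).trans
          (le_abs_self _)
    _ = |∫ ω, signedRpow β (g ω) ∂μ| := by rw [integral_eq, abs_mul, abs_signedRpow ha]

theorem half_sq_le_of_integral_sub_sq_le {a : ℝ} (hβ : 0 < β) (hβ₂ : β ≤ 2) (hg : MemLp g 2 μ)
    (h : 20 * ∫ ω, (g ω - a) ^ 2 ∂μ ≤ a ^ 2) :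
    (a / 2) ^ 2 ≤ 2 ^ (1 / β) * |∫ ω, signedRpow β (g ω) ∂μ| ^ (2 / β) := by
  rcases eq_or_ne a 0 with rfl | ha
  · rw [zero_div, zero_pow two_ne_zero]
    positivity
  have ratio_le : (∫ ω, (g ω - a) ^ 2 ∂μ) / a ^ 2 ≤ 1 / 20 := by
    rw [div_le_iff₀ (by positivity)]
    linarith
  have rpow_le : |a / 2| ^ β * (3 / 4) ≤ |∫ ω, signedRpow β (g ω) ∂μ| :=
    calc |a / 2| ^ β * (3 / 4)
        ≤ |a / 2| ^ β * (1 - 5 * ((∫ ω, (g ω - a) ^ 2 ∂μ) / a ^ 2)) := by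
          gcongr
          linarith
      _ ≤ _ := abs_half_rpow_mul_one_sub_le_abs_integral_signedRpow ha hβ hβ₂ hg
  rw [← sq_abs (a / 2)]
  refine sq_le_rpow_mul_rpow_of_rpow_sq_le hβ zero_le_two (abs_nonneg _) (abs_nonneg _) ?_
  calc (|a / 2| ^ β) ^ 2 ≤ 2 * (|a / 2| ^ β * (3 / 4)) ^ 2 := by
        linarith [sq_nonneg (|a / 2| ^ β)]
    _ ≤ 2 * |∫ ω, signedRpow β (g ω) ∂μ| ^ 2 := by gcongr

theorem stmt0_general (hβ : 0 < β) (hβ₂ : β ≤ 2) (hg : MemLp g 2 μ) (a : ℝ) :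
    1 / 42 * (∫ ω, g ω ^ 2 ∂μ) - 2 ^ (1 / β) * |∫ ω, signedRpow β (g ω) ∂μ| ^ (2 / β) ≤
      ∫ ω, (g ω - a) ^ 2 ∂μ := by
  have sq_le := integral_sq_le_two_mul_integral_sub_sq_add hg a
  have sub_sq_nonneg : 0 ≤ ∫ ω, (g ω - a) ^ 2 ∂μ := integral_nonneg fun ω ↦ sq_nonneg (g ω - a)
  have correction_nonneg :
      0 ≤ 2 ^ (1 / β) * |∫ ω, signedRpow β (g ω) ∂μ| ^ (2 / β) := by positivity
  rcases le_total (a ^ 2) (20 * ∫ ω, (g ω - a) ^ 2 ∂μ) with far | near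
  · linarith
  · have half_sq_le := half_sq_le_of_integral_sub_sq_le hβ hβ₂ hg near
    linarith

end Integral

/-- Poincaré-type lemma on a general probability space: there is an absolute
constant `c₁ > 0` such that for every `0 < β ≤ 2` and every square-integrable
random variable `g`,
`E|g - Eg|² ≥ c₁ E|g|² - 2^{1/β} |E[|g|^β sgn g]|^{2/β}`. -/
theorem stmt0 :
    ∃ c₁ : ℝ, 0 < c₁ ∧
      ∀ (Ω : Type) (_ : MeasurableSpace Ω) (μ : Measure Ω), IsProbabilityMeasure μ →
        ∀ β : ℝ, 0 < β → β ≤ 2 →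
          ∀ g : Ω → ℝ, MemLp g 2 μ →
            (∫ ω, (g ω - ∫ ω', g ω' ∂μ) ^ 2 ∂μ) ≥
              c₁ * (∫ ω, (g ω) ^ 2 ∂μ) -
                (2 : ℝ) ^ (1 / β) * |∫ ω, |g ω| ^ β * Real.sign (g ω) ∂μ| ^ (2 / β) :=
  ⟨1 / 42, by norm_num, fun _ _ μ _ _ hβ hβ₂ g hg ↦ stmt0_general hβ hβ₂ hg (∫ ω, g ω ∂μ)⟩
end

section
/- There exists an absolute constant c₁ > 0 such that for every β with 0 < β ≤ 2, every n ∈ ℕ, and every function g : C_n → ℝ, one has E|∇g|² ≥ c₁ · E|g|² − 2^{1/β} · |E[|g|^β · sgn(g)]|^{2/β}. -/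
open Finset MeasureTheory Real

noncomputable section

/-- Expectation on the Hamming cube `{-1,1}^n`, modeled as `Fin n → Bool`
(`true ↔ 1`, `false ↔ -1`), with the uniform probability measure. -/
def cubeE {n : ℕ} (f : (Fin n → Bool) → ℝ) : ℝ :=
  (∑ x : Fin n → Bool, f x) / 2 ^ n

/-- The Walsh monomial `x^S = ∏_{i ∈ S} x_i`. -/
def walsh {n : ℕ} (S : Finset (Fin n)) (x : Fin n → Bool) : ℝ :=
  ∏ i ∈ S, (if x i then (1 : ℝ) else -1)

/-- Fourier coefficient `f̂(S) = E (f · x^S)`. -/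
def cubeFourier {n : ℕ} (f : (Fin n → Bool) → ℝ) (S : Finset (Fin n)) : ℝ :=
  cubeE fun x => f x * walsh S x

/-- The heat semigroup `e^{tΔ} f = Σ_S e^{-t|S|} f̂(S) x^S`. -/
def heat1 {n : ℕ} (t : ℝ) (f : (Fin n → Bool) → ℝ) : (Fin n → Bool) → ℝ :=
  fun x => ∑ S : Finset (Fin n), Real.exp (-t * (S.card : ℝ)) * cubeFourier f S * walsh S x

/-- The fractional heat semigroup `e^{tΔ_γ} f = Σ_S e^{-t|S|^γ} f̂(S) x^S`. -/
def heatFrac {n : ℕ} (γ t : ℝ) (f : (Fin n → Bool) → ℝ) : (Fin n → Bool) → ℝ :=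
  fun x => ∑ S : Finset (Fin n), Real.exp (-t * (S.card : ℝ) ^ γ) * cubeFourier f S * walsh S x

/-- The Laplacian `Δf = -Σ_S |S| f̂(S) x^S`. -/
def lap {n : ℕ} (f : (Fin n → Bool) → ℝ) : (Fin n → Bool) → ℝ :=
  fun x => -∑ S : Finset (Fin n), (S.card : ℝ) * cubeFourier f S * walsh S x

/-- The fractional Laplacian `Δ_γ f = -Σ_S |S|^γ f̂(S) x^S`. -/
def fracLap {n : ℕ} (γ : ℝ) (f : (Fin n → Bool) → ℝ) : (Fin n → Bool) → ℝ :=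
  fun x => -∑ S : Finset (Fin n), (S.card : ℝ) ^ γ * cubeFourier f S * walsh S x

/-- The discrete partial derivative `∇_j f`. -/
def cubeGrad {n : ℕ} (j : Fin n) (f : (Fin n → Bool) → ℝ) (x : Fin n → Bool) : ℝ :=
  (f (Function.update x j true) - f (Function.update x j false)) / 2

/-- The squared length of the discrete gradient, `|∇f|²(x) = Σ_j |∇_j f(x)|²`. -/
def gradSq {n : ℕ} (f : (Fin n → Bool) → ℝ) (x : Fin n → Bool) : ℝ :=
  ∑ j : Fin n, (cubeGrad j f x) ^ 2

/-- The `L^p` norm `‖f‖_p = (E|f|^p)^{1/p}` on the Hamming cube. -/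
def pNorm {n : ℕ} (p : ℝ) (f : (Fin n → Bool) → ℝ) : ℝ :=
  (cubeE fun x => |f x| ^ p) ^ (1 / p)

/-!
The Poincaré inequality bounds `Var g` by `E|∇g|²`. If `Var g` is at least `(E g)² / 100`, it
already controls a fixed fraction of `E g²`. Otherwise `g` is concentrated near its mean `m`, which
we may take positive since `|u|^β sgn u` is odd, and integrating the pointwise bound
`2^{-β} - 4(u - 1)² ≤ |u|^β sgn u` at `u = g / m` shows that `E[|g|^β sgn g]` is at least a multiple
of `m^β`, so that the correction term controls `m²`.
-/

section SignedPow

variable {β : ℝ}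

/-- The odd power `|u| ^ β * sgn u`, whose mean governs the correction term in the Poincaré-type
inequality. Its value at `0` is `0` for every `β`, including `β = 0`. -/
def signedPow (β u : ℝ) : ℝ := |u| ^ β * Real.sign u

lemma signedPow_of_pos {u : ℝ} (hu : 0 < u) : signedPow β u = u ^ β := by
  rw [signedPow, abs_of_pos hu, Real.sign_of_pos hu, mul_one]

lemma signedPow_zero : signedPow β 0 = 0 := by
  rw [signedPow, Real.sign_zero, mul_zero]

lemma signedPow_neg (u : ℝ) : signedPow β (-u) = -signedPow β u := by
  rw [signedPow, signedPow, abs_neg, Real.sign_neg, mul_neg]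

lemma signedPow_mul {c : ℝ} (hc : 0 < c) (u : ℝ) :
    signedPow β (c * u) = c ^ β * signedPow β u := by
  have of_pos {v : ℝ} (hv : 0 < v) : signedPow β (c * v) = c ^ β * signedPow β v := by
    rw [signedPow_of_pos (mul_pos hc hv), signedPow_of_pos hv, mul_rpow hc.le hv.le]
  rcases lt_trichotomy u 0 with hu | rfl | hu
  · have := of_pos (neg_pos.2 hu)
    rwa [mul_neg, signedPow_neg, signedPow_neg, mul_neg, neg_inj] at this
  · rw [mul_zero, signedPow_zero, mul_zero]
  · exact of_pos hu

lemma measurable_signedPow : Measurable (signedPow β) := by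
  have measurable_sign : Measurable Real.sign :=
    Measurable.ite measurableSet_Iio measurable_const
      (Measurable.ite measurableSet_Ioi measurable_const measurable_const)
  exact (measurable_id.abs.pow_const β).mul measurable_sign

lemma abs_signedPow_le (hβ : 0 ≤ β) (hβ2 : β ≤ 2) (u : ℝ) : |signedPow β u| ≤ 1 + u ^ 2 := by
  have hsign : |Real.sign u| ≤ 1 := by
    rcases Real.sign_apply_eq u with h | h | h <;> norm_num [h]
  have hpow : |u| ^ β ≤ 1 + u ^ 2 := by
    rcases le_total |u| 1 with hu | hu
    · linarith [rpow_le_one (abs_nonneg u) hu hβ, sq_nonneg u]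
    · have := rpow_le_rpow_of_exponent_le hu hβ2
      rw [rpow_two, sq_abs] at this
      linarith
  rw [signedPow, abs_mul, abs_of_nonneg (by positivity)]
  exact (mul_le_of_le_one_right (by positivity) hsign).trans hpow

lemma le_signedPow (hβ : 0 ≤ β) (hβ2 : β ≤ 2) (u : ℝ) :
    (1 / 2) ^ β - 4 * (u - 1) ^ 2 ≤ signedPow β u := by
  have hle_one : (1 / 2 : ℝ) ^ β ≤ 1 := rpow_le_one (by norm_num) (by norm_num) hβ
  rcases le_or_gt u 0 with hneg | hpos
  · have := neg_le_of_abs_le (abs_signedPow_le hβ hβ2 u)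
    nlinarith
  rw [signedPow_of_pos hpos]
  rcases le_total u (1 / 2) with hsmall | hlarge
  · have : 0 ≤ u ^ β := rpow_nonneg hpos.le β
    nlinarith
  · have : (1 / 2 : ℝ) ^ β ≤ u ^ β := rpow_le_rpow (by norm_num) hlarge hβ
    nlinarith [sq_nonneg (u - 1)]

lemma one_tenth_rpow_le (hβ : 0 ≤ β) (hβ2 : β ≤ 2) :
    (1 / 10 : ℝ) ^ β ≤ √2 * ((1 / 2) ^ β - 1 / 25) := by
  have hmono : (1 / 10 : ℝ) ^ β ≤ (1 / 2) ^ β :=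
    rpow_le_rpow (by norm_num) (by norm_num) hβ
  have hquarter : (1 / 4 : ℝ) ≤ (1 / 2) ^ β := by
    have := rpow_le_rpow_of_exponent_ge (x := (1 / 2 : ℝ)) (by norm_num) (by norm_num) hβ2
    norm_num at this ⊢
    exact this
  have hsqrt : (1.4 : ℝ) ≤ √2 := le_sqrt_of_sq_le (by norm_num)
  nlinarith

end SignedPow

section SignedMoment

open ProbabilityTheory

variable {Ω : Type*} [MeasurableSpace Ω] {μ : Measure Ω} {X : Ω → ℝ} {β : ℝ}

lemma integrable_signedPow [IsFiniteMeasure μ] (hβ : 0 ≤ β) (hβ2 : β ≤ 2) (hX : MemLp X 2 μ) :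
    Integrable (fun ω => signedPow β (X ω)) μ :=
  ((integrable_const 1).add hX.integrable_sq).mono'
    (measurable_signedPow.comp_aemeasurable hX.aemeasurable).aestronglyMeasurable
    (.of_forall fun ω => abs_signedPow_le hβ hβ2 (X ω))

variable [IsProbabilityMeasure μ]

lemma le_integral_signedPow_of_integral_pos (hβ : 0 ≤ β) (hβ2 : β ≤ 2) (hX : MemLp X 2 μ)
    (hpos : 0 < μ[X]) :
    μ[X] ^ β * ((1 / 2) ^ β - 4 * (Var[X; μ] / μ[X] ^ 2)) ≤ ∫ ω, signedPow β (X ω) ∂μ := by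
  set m := μ[X]
  have hsq : Integrable (fun ω => (X ω - m) ^ 2) μ := (hX.sub (memLp_const m)).integrable_sq
  have hpointwise (ω : Ω) :
      m ^ β * ((1 / 2) ^ β - 4 * ((X ω - m) ^ 2 / m ^ 2)) ≤ signedPow β (X ω) := by
    calc m ^ β * ((1 / 2) ^ β - 4 * ((X ω - m) ^ 2 / m ^ 2))
        = m ^ β * ((1 / 2) ^ β - 4 * (X ω / m - 1) ^ 2) := by
          rw [← div_pow, sub_div, div_self hpos.ne']
      _ ≤ m ^ β * signedPow β (X ω / m) := by
          gcongr
          exact le_signedPow hβ hβ2 _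
      _ = signedPow β (X ω) := by
          rw [← signedPow_mul hpos, mul_div_cancel₀ _ hpos.ne']
  have hdefect : Integrable (fun ω => 4 * ((X ω - m) ^ 2 / m ^ 2)) μ :=
    (hsq.div_const _).const_mul 4
  calc m ^ β * ((1 / 2) ^ β - 4 * (Var[X; μ] / m ^ 2))
      = ∫ ω, m ^ β * ((1 / 2) ^ β - 4 * ((X ω - m) ^ 2 / m ^ 2)) ∂μ := by
        rw [integral_const_mul, integral_sub (integrable_const _) hdefect, integral_const_mul,
          integral_div, variance_eq_integral hX.aemeasurable, integral_const, probReal_univ,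
          one_smul]
    _ ≤ ∫ ω, signedPow β (X ω) ∂μ :=
        integral_mono (((integrable_const _).sub hdefect).const_mul _)
          (integrable_signedPow hβ hβ2 hX) hpointwise

lemma rpow_integral_div_ten_le_of_integral_pos (hβ : 0 ≤ β) (hβ2 : β ≤ 2) (hX : MemLp X 2 μ)
    (hpos : 0 < μ[X]) (hvar : Var[X; μ] ≤ μ[X] ^ 2 / 100) :
    (μ[X] / 10) ^ β ≤ √2 * ∫ ω, signedPow β (X ω) ∂μ := by
  have hratio : Var[X; μ] / μ[X] ^ 2 ≤ 1 / 100 := by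
    rw [div_le_iff₀ (by positivity)]
    linarith
  calc (μ[X] / 10) ^ β = μ[X] ^ β * (1 / 10) ^ β := by
        rw [← mul_rpow hpos.le (by norm_num), mul_one_div]
    _ ≤ μ[X] ^ β * (√2 * ((1 / 2) ^ β - 1 / 25)) := by
        gcongr
        exact one_tenth_rpow_le hβ hβ2
    _ = √2 * (μ[X] ^ β * ((1 / 2) ^ β - 1 / 25)) := by ring
    _ ≤ √2 * (μ[X] ^ β * ((1 / 2) ^ β - 4 * (Var[X; μ] / μ[X] ^ 2))) := by
        gcongr
        linarith
    _ ≤ √2 * ∫ ω, signedPow β (X ω) ∂μ := by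
        gcongr
        exact le_integral_signedPow_of_integral_pos hβ hβ2 hX hpos

lemma rpow_abs_integral_div_ten_le (hβ : 0 < β) (hβ2 : β ≤ 2) (hX : MemLp X 2 μ)
    (hvar : Var[X; μ] ≤ μ[X] ^ 2 / 100) :
    (|μ[X]| / 10) ^ β ≤ √2 * |∫ ω, signedPow β (X ω) ∂μ| := by
  rcases lt_trichotomy μ[X] 0 with hneg | hzero | hpos
  · have hmean : ∫ ω, (-X) ω ∂μ = -μ[X] := integral_neg X
    have := rpow_integral_div_ten_le_of_integral_pos hβ.le hβ2 hX.neg (by rwa [hmean, neg_pos])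
      (by rwa [hmean, variance_neg, neg_sq])
    simp only [Pi.neg_apply, signedPow_neg, integral_neg] at this
    rw [abs_of_neg hneg]
    exact this.trans (by gcongr; exact neg_le_abs _)
  · rw [hzero, abs_zero, zero_div, zero_rpow hβ.ne']
    positivity
  · rw [abs_of_pos hpos]
    exact (rpow_integral_div_ten_le_of_integral_pos hβ.le hβ2 hX hpos hvar).trans
      (by gcongr; exact le_abs_self _)

lemma sq_integral_div_le (hβ : 0 < β) (hβ2 : β ≤ 2) (hX : MemLp X 2 μ)
    (hvar : Var[X; μ] ≤ μ[X] ^ 2 / 100) :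
    μ[X] ^ 2 / 100 ≤ 2 ^ (1 / β) * |∫ ω, signedPow β (X ω) ∂μ| ^ (2 / β) := by
  calc μ[X] ^ 2 / 100 = ((|μ[X]| / 10) ^ β) ^ (2 / β) := by
        rw [← rpow_mul (by positivity), mul_div_cancel₀ _ hβ.ne', rpow_two, div_pow, sq_abs]
        norm_num
    _ ≤ (√2 * |∫ ω, signedPow β (X ω) ∂μ|) ^ (2 / β) := by
        gcongr
        exact rpow_abs_integral_div_ten_le hβ hβ2 hX hvar
    _ = 2 ^ (1 / β) * |∫ ω, signedPow β (X ω) ∂μ| ^ (2 / β) := by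
        rw [mul_rpow (by positivity) (by positivity), sqrt_eq_rpow, ← rpow_mul (by norm_num),
          one_div_mul_eq_div, div_div_cancel_left' two_ne_zero, one_div]

lemma integral_sq_le_variance_add (hβ : 0 < β) (hβ2 : β ≤ 2) (hX : MemLp X 2 μ) :
    1 / 101 * μ[X ^ 2] ≤
      Var[X; μ] + 2 ^ (1 / β) * |∫ ω, signedPow β (X ω) ∂μ| ^ (2 / β) := by
  have hsplit : Var[X; μ] = μ[X ^ 2] - μ[X] ^ 2 := variance_eq_sub hX
  rcases le_total Var[X; μ] (μ[X] ^ 2 / 100) with hsmall | hlarge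
  · linarith [sq_integral_div_le hβ hβ2 hX hsmall, variance_nonneg X μ]
  · have : 0 ≤ (2 : ℝ) ^ (1 / β) * |∫ ω, signedPow β (X ω) ∂μ| ^ (2 / β) := by positivity
    linarith

end SignedMoment

section Poincare

open ProbabilityTheory

variable {n : ℕ}

/-- The uniform probability measure on the Hamming cube, so that `cubeE` is integration against it
(`cubeE_eq_integral`). -/
abbrev cubeMeasure (n : ℕ) : Measure (Fin n → Bool) :=
  (PMF.uniformOfFintype (Fin n → Bool)).toMeasure

lemma cubeE_eq_integral (f : (Fin n → Bool) → ℝ) : cubeE f = ∫ x, f x ∂cubeMeasure n := by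
  simp [PMF.integral_eq_sum, cubeE, ← Finset.mul_sum, div_eq_inv_mul]

lemma variance_cubeMeasure (f : (Fin n → Bool) → ℝ) :
    Var[f; cubeMeasure n] = cubeE (fun x => f x ^ 2) - cubeE f ^ 2 := by
  rw [variance_eq_sub .of_discrete, cubeE_eq_integral, cubeE_eq_integral]
  rfl

lemma sq_cubeE_le (f : (Fin n → Bool) → ℝ) : cubeE f ^ 2 ≤ cubeE fun x => f x ^ 2 :=
  sub_nonneg.1 (variance_cubeMeasure f ▸ variance_nonneg f (cubeMeasure n))

lemma cubeE_add (f g : (Fin n → Bool) → ℝ) :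
    cubeE (fun x => f x + g x) = cubeE f + cubeE g := by
  simp only [cubeE, sum_add_distrib, add_div]

lemma cubeE_half_sub (f g : (Fin n → Bool) → ℝ) :
    cubeE (fun x => (f x - g x) / 2) = (cubeE f - cubeE g) / 2 := by
  simp only [cubeE, ← sum_div, sum_sub_distrib]
  ring

lemma cubeE_succ (f : (Fin (n + 1) → Bool) → ℝ) :
    cubeE f =
      (cubeE (fun x => f (Fin.cons true x)) + cubeE fun x => f (Fin.cons false x)) / 2 := by
  have hsum : ∑ x, f x = ∑ x, f (Fin.cons true x) + ∑ x, f (Fin.cons false x) := by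
    rw [← (Fin.consEquiv fun _ : Fin (n + 1) => Bool).sum_comp, Fintype.sum_prod_type,
      Fintype.sum_bool]
    rfl
  rw [cubeE, cubeE, cubeE, hsum, pow_succ, ← add_div, div_div]

lemma gradSq_cons (g : (Fin (n + 1) → Bool) → ℝ) (b : Bool) (x : Fin n → Bool) :
    gradSq g (Fin.cons b x) =
      ((g (Fin.cons true x) - g (Fin.cons false x)) / 2) ^ 2 +
        gradSq (fun y => g (Fin.cons b y)) x := by
  simp only [gradSq, cubeGrad, Fin.sum_univ_succ, Fin.update_cons_zero, Fin.cons_update]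

lemma variance_cubeMeasure_succ (g : (Fin (n + 1) → Bool) → ℝ) :
    Var[g; cubeMeasure (n + 1)] =
      (Var[fun x => g (Fin.cons true x); cubeMeasure n] +
        Var[fun x => g (Fin.cons false x); cubeMeasure n]) / 2 +
      ((cubeE (fun x => g (Fin.cons true x)) - cubeE fun x => g (Fin.cons false x)) / 2) ^ 2 := by
  simp only [variance_cubeMeasure, cubeE_succ]
  ring

lemma cubeE_gradSq_succ (g : (Fin (n + 1) → Bool) → ℝ) :
    cubeE (gradSq g) =
      (cubeE (gradSq fun x => g (Fin.cons true x)) +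
        cubeE (gradSq fun x => g (Fin.cons false x))) / 2 +
      cubeE fun x => ((g (Fin.cons true x) - g (Fin.cons false x)) / 2) ^ 2 := by
  simp only [cubeE_succ (gradSq g), gradSq_cons, cubeE_add]
  ring

theorem variance_le_cubeE_gradSq (g : (Fin n → Bool) → ℝ) :
    Var[g; cubeMeasure n] ≤ cubeE (gradSq g) := by
  induction n with
  | zero => simp [variance_cubeMeasure, cubeE, gradSq]
  | succ n ih =>
    have hjensen :=
      sq_cubeE_le fun x => (g (Fin.cons true x) - g (Fin.cons false x)) / 2
    rw [cubeE_half_sub] at hjensen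
    rw [variance_cubeMeasure_succ, cubeE_gradSq_succ]
    linarith [ih fun x => g (Fin.cons true x), ih fun x => g (Fin.cons false x)]

end Poincare

/-- Poincaré-type inequality on the Hamming cube: there is an absolute constant
`c₁ > 0` such that for every `0 < β ≤ 2`, every `n`, and every `g : C_n → ℝ`,
`E|∇g|² ≥ c₁ E|g|² - 2^{1/β} |E[|g|^β sgn g]|^{2/β}`. -/
theorem stmt1 :
    ∃ c₁ : ℝ, 0 < c₁ ∧
      ∀ β : ℝ, 0 < β → β ≤ 2 →
        ∀ (n : ℕ) (g : (Fin n → Bool) → ℝ),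
          cubeE (gradSq g) ≥
            c₁ * cubeE (fun x => (g x) ^ 2) -
              (2 : ℝ) ^ (1 / β) * |cubeE fun x => |g x| ^ β * Real.sign (g x)| ^ (2 / β) := by
  refine ⟨1 / 101, by norm_num, fun β hβ hβ2 n g => ?_⟩
  have hmoment := integral_sq_le_variance_add hβ hβ2 (X := g) (μ := cubeMeasure n) .of_discrete
  simp only [Pi.pow_apply, ← cubeE_eq_integral, signedPow] at hmoment
  linarith [variance_le_cubeE_gradSq g]
end
end

section
/- Let k ∈ ℕ with k ≥ 1, let n ∈ ℕ, and let f : C_n → ℝ have Fourier coefficients satisfying f̂(∅) = 0 and f̂(S) = 0 whenever |S| > k. Then for every t ≥ 3k·log 3, one has ‖e^{tΔ} f‖₁ ≤ e^{−t/2} ‖f‖₁. -/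
/-!
Bonami's inequality `‖f‖₄ ≤ √3 ^ k ‖f‖₂` for Walsh polynomials of degree at most `k` is proved by
induction on the number of variables: splitting off `x_i`, write `f = g + x_i h`, where `h` has
degree at most `k - 1` and the terms of `f²` and `f⁴` odd in `x_i` average to zero. Interpolating
`L²` between `L¹` and `L⁴` turns it into `‖f‖₂ ≤ 3 ^ k ‖f‖₁`. By Parseval's identity `e^{tΔ}`
contracts the `L²` norm of mean-zero functions by the factor `e^{-t}`, so that
`‖e^{tΔ} f‖₁ ≤ ‖e^{tΔ} f‖₂ ≤ e^{-t} ‖f‖₂ ≤ e^{-t} 3 ^ k ‖f‖₁`.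
-/

open Finset MeasureTheory Real

noncomputable section

open scoped BigOperators

section Expect

variable {ι R : Type*} [Field R] [LinearOrder R] [IsStrictOrderedRing R]

lemma expect_sq_le_expect_mul_expect_of_sq_le_mul (s : Finset ι) {r f g : ι → R}
    (hf : ∀ i ∈ s, 0 ≤ f i) (hg : ∀ i ∈ s, 0 ≤ g i) (hr : ∀ i ∈ s, r i ^ 2 ≤ f i * g i) :
    (𝔼 i ∈ s, r i) ^ 2 ≤ (𝔼 i ∈ s, f i) * 𝔼 i ∈ s, g i := by
  simp only [expect, smul_pow, inv_pow, smul_mul_smul_comm, ← sq]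
  gcongr
  exact sum_sq_le_sum_mul_sum_of_sq_le_mul s hf hg hr

lemma expect_sq_pow_three_le (s : Finset ι) (f : ι → R) :
    (𝔼 i ∈ s, f i ^ 2) ^ 3 ≤ (𝔼 i ∈ s, |f i|) ^ 2 * 𝔼 i ∈ s, f i ^ 4 := by
  have hnonneg : 0 ≤ 𝔼 i ∈ s, f i ^ 2 := by positivity
  rcases hnonneg.eq_or_lt with hzero | hpos
  · rw [← hzero, zero_pow three_ne_zero]
    positivity
  have h13 : (𝔼 i ∈ s, f i ^ 2) ^ 2 ≤ (𝔼 i ∈ s, |f i|) * 𝔼 i ∈ s, |f i| ^ 3 :=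
    expect_sq_le_expect_mul_expect_of_sq_le_mul s (fun _ _ => by positivity)
      (fun _ _ => by positivity) fun i _ => le_of_eq <| by
        rw [← sq_abs (f i)]
        ring
  have h24 : (𝔼 i ∈ s, |f i| ^ 3) ^ 2 ≤ (𝔼 i ∈ s, f i ^ 2) * 𝔼 i ∈ s, f i ^ 4 :=
    expect_sq_le_expect_mul_expect_of_sq_le_mul s (fun _ _ => by positivity)
      (fun _ _ => by positivity) fun i _ => le_of_eq <| by
        rw [pow_right_comm, sq_abs]
        ring
  refine le_of_mul_le_mul_left ?_ hpos
  calc (𝔼 i ∈ s, f i ^ 2) * (𝔼 i ∈ s, f i ^ 2) ^ 3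
      = ((𝔼 i ∈ s, f i ^ 2) ^ 2) ^ 2 := by ring
    _ ≤ ((𝔼 i ∈ s, |f i|) * 𝔼 i ∈ s, |f i| ^ 3) ^ 2 := by gcongr
    _ = (𝔼 i ∈ s, |f i|) ^ 2 * (𝔼 i ∈ s, |f i| ^ 3) ^ 2 := mul_pow ..
    _ ≤ (𝔼 i ∈ s, |f i|) ^ 2 * ((𝔼 i ∈ s, f i ^ 2) * 𝔼 i ∈ s, f i ^ 4) := by gcongr
    _ = (𝔼 i ∈ s, f i ^ 2) * ((𝔼 i ∈ s, |f i|) ^ 2 * 𝔼 i ∈ s, f i ^ 4) := by ring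

end Expect

section Norm

variable {n : ℕ}

lemma cubeE_eq_expect (f : (Fin n → Bool) → ℝ) : cubeE f = 𝔼 x, f x := by
  simp [cubeE, Fintype.expect_eq_sum_div_card]

lemma pNorm_nonneg (p : ℝ) (f : (Fin n → Bool) → ℝ) : 0 ≤ pNorm p f := by
  rw [pNorm, cubeE_eq_expect]
  positivity

lemma pNorm_one (f : (Fin n → Bool) → ℝ) : pNorm 1 f = 𝔼 x, |f x| := by
  simp [pNorm, cubeE_eq_expect]

lemma pNorm_two_sq (f : (Fin n → Bool) → ℝ) : pNorm 2 f ^ 2 = 𝔼 x, f x ^ 2 := by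
  have hnonneg : 0 ≤ 𝔼 x, f x ^ 2 := by positivity
  simp only [pNorm, cubeE_eq_expect, rpow_two, sq_abs, ← sqrt_eq_rpow, sq_sqrt hnonneg]

lemma pNorm_one_le_pNorm_two (f : (Fin n → Bool) → ℝ) : pNorm 1 f ≤ pNorm 2 f := by
  refine le_of_sq_le_sq ?_ (pNorm_nonneg 2 f)
  rw [pNorm_one, pNorm_two_sq]
  simpa using expect_mul_sq_le_sq_mul_sq univ (fun x => |f x|) 1

end Norm

section Walsh

variable {n : ℕ} {i : Fin n} {S T : Finset (Fin n)}

lemma walsh_sq (S : Finset (Fin n)) (x : Fin n → Bool) : walsh S x ^ 2 = 1 := by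
  rw [walsh, ← prod_pow]
  exact prod_eq_one fun i _ => by split_ifs <;> norm_num

lemma walsh_insert (hi : i ∉ S) (x : Fin n → Bool) :
    walsh (insert i S) x = walsh {i} x * walsh S x := by
  simp only [walsh, prod_insert hi, prod_singleton]

lemma dependsOn_walsh (S : Finset (Fin n)) : DependsOn (walsh S) S := fun x y hxy =>
  prod_congr rfl fun i hi => by rw [hxy i hi]

lemma walsh_update_not (hi : i ∈ S) (x : Fin n → Bool) :
    walsh S (Function.update x i (!x i)) = -walsh S x := by
  have herase : walsh (S.erase i) (Function.update x i (!x i)) = walsh (S.erase i) x :=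
    dependsOn_walsh _ fun j hj => Function.update_of_ne (ne_of_mem_erase hj) ..
  have hflip : walsh {i} (Function.update x i (!x i)) = -walsh {i} x := by
    cases h : x i <;> simp [walsh, h]
  rw [← insert_erase hi, walsh_insert (notMem_erase i S), walsh_insert (notMem_erase i S),
    herase, hflip, neg_mul]

lemma expect_walsh_mul_eq_zero (hi : i ∈ S) {g : (Fin n → Bool) → ℝ} (hg : DependsOn g {i}ᶜ) :
    𝔼 x, walsh S x * g x = 0 := by
  have hg_flip (x : Fin n → Bool) : g (Function.update x i (!x i)) = g x :=
    hg fun j hj => Function.update_of_ne hj ..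
  rw [Fintype.expect_eq_sum_div_card, div_eq_zero_iff]
  refine .inl (sum_involution (fun x _ => Function.update x i (!x i)) (fun x _ => ?_)
    (fun x _ _ => ?_) (fun x _ => mem_univ _) fun x _ => ?_)
  · rw [walsh_update_not hi, hg_flip, neg_mul, add_neg_cancel]
  · exact fun h => by simpa using congrFun h i
  · simp

lemma sum_walsh_mul_walsh (x y : Fin n → Bool) :
    ∑ S, walsh S x * walsh S y = if x = y then 2 ^ n else 0 := by
  have hprod : ∑ S, walsh S x * walsh S y = ∏ i, (1 + walsh {i} x * walsh {i} y) := by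
    simp only [prod_one_add, powerset_univ, walsh, prod_singleton, prod_mul_distrib]
  rw [hprod]
  split_ifs with hxy
  · subst hxy
    simp only [← sq, walsh_sq]
    norm_num
  · obtain ⟨i, hi⟩ := Function.ne_iff.1 hxy
    refine prod_eq_zero (mem_univ i) ?_
    cases hx : x i <;> cases hy : y i <;> simp_all [walsh]

section AddWalshMul

variable {g h : (Fin n → Bool) → ℝ} (hi : i ∈ S) (hg : DependsOn g {i}ᶜ) (hh : DependsOn h {i}ᶜ)

include hi hg hh

lemma expect_add_walsh_mul_sq :
    𝔼 x, (g x + walsh S x * h x) ^ 2 = 𝔼 x, g x ^ 2 + 𝔼 x, h x ^ 2 := by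
  have hodd : 𝔼 x, walsh S x * (2 * g x * h x) = 0 :=
    expect_walsh_mul_eq_zero hi fun x y hxy => by rw [hg hxy, hh hxy]
  calc 𝔼 x, (g x + walsh S x * h x) ^ 2
      = 𝔼 x, (g x ^ 2 + h x ^ 2 + walsh S x * (2 * g x * h x)) :=
        expect_congr rfl fun x _ => by linear_combination h x ^ 2 * walsh_sq S x
    _ = 𝔼 x, g x ^ 2 + 𝔼 x, h x ^ 2 := by
        rw [expect_add_distrib, expect_add_distrib, hodd, add_zero]

lemma expect_add_walsh_mul_pow_four :
    𝔼 x, (g x + walsh S x * h x) ^ 4 =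
      𝔼 x, g x ^ 4 + 6 * 𝔼 x, g x ^ 2 * h x ^ 2 + 𝔼 x, h x ^ 4 := by
  have hodd : 𝔼 x, walsh S x * (4 * g x ^ 3 * h x + 4 * g x * h x ^ 3) = 0 :=
    expect_walsh_mul_eq_zero hi fun x y hxy => by rw [hg hxy, hh hxy]
  calc 𝔼 x, (g x + walsh S x * h x) ^ 4
      = 𝔼 x, (g x ^ 4 + 6 * (g x ^ 2 * h x ^ 2) + h x ^ 4 +
          walsh S x * (4 * g x ^ 3 * h x + 4 * g x * h x ^ 3)) :=
        expect_congr rfl fun x _ => by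
          linear_combination (6 * g x ^ 2 * h x ^ 2 + 4 * g x * h x ^ 3 * walsh S x +
            h x ^ 4 * (walsh S x ^ 2 + 1)) * walsh_sq S x
    _ = 𝔼 x, g x ^ 4 + 6 * 𝔼 x, g x ^ 2 * h x ^ 2 + 𝔼 x, h x ^ 4 := by
        rw [expect_add_distrib, expect_add_distrib, expect_add_distrib, hodd, add_zero,
          mul_expect]

lemma expect_add_walsh_mul_pow_four_le {q : ℝ} (hq : 0 ≤ q)
    (hg4 : 𝔼 x, g x ^ 4 ≤ 9 * q * (𝔼 x, g x ^ 2) ^ 2)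
    (hh4 : 𝔼 x, h x ^ 4 ≤ q * (𝔼 x, h x ^ 2) ^ 2) :
    𝔼 x, (g x + walsh S x * h x) ^ 4 ≤ 9 * q * (𝔼 x, (g x + walsh S x * h x) ^ 2) ^ 2 := by
  rw [expect_add_walsh_mul_sq hi hg hh, expect_add_walsh_mul_pow_four hi hg hh]
  have hmixed : 𝔼 x, g x ^ 2 * h x ^ 2 ≤ 3 * q * (𝔼 x, g x ^ 2) * 𝔼 x, h x ^ 2 := by
    refine le_of_sq_le_sq ?_ (by positivity)
    calc (𝔼 x, g x ^ 2 * h x ^ 2) ^ 2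
        ≤ (𝔼 x, (g x ^ 2) ^ 2) * 𝔼 x, (h x ^ 2) ^ 2 := expect_mul_sq_le_sq_mul_sq ..
      _ = (𝔼 x, g x ^ 4) * 𝔼 x, h x ^ 4 := by simp only [← pow_mul, Nat.reduceMul]
      _ ≤ (9 * q * (𝔼 x, g x ^ 2) ^ 2) * (q * (𝔼 x, h x ^ 2) ^ 2) := by gcongr
      _ = (3 * q * (𝔼 x, g x ^ 2) * 𝔼 x, h x ^ 2) ^ 2 := by ring
  nlinarith only [hg4, hh4, hmixed, mul_nonneg hq (sq_nonneg (𝔼 x, h x ^ 2))]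

end AddWalshMul

/-- The Walsh polynomial `∑_{S ⊆ T} a_S x^S` in the variables `x_i`, `i ∈ T`. The set `T` is a
parameter so that estimates can be proved by adding one variable at a time. -/
def walshSum (T : Finset (Fin n)) (a : Finset (Fin n) → ℝ) (x : Fin n → Bool) : ℝ :=
  ∑ S ∈ T.powerset, a S * walsh S x

lemma dependsOn_walshSum (T : Finset (Fin n)) (a : Finset (Fin n) → ℝ) :
    DependsOn (walshSum T a) T := fun x y hxy =>
  sum_congr rfl fun S hS => by
    rw [dependsOn_walsh S fun i hi => hxy i (mem_powerset.1 hS hi)]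

lemma dependsOn_walshSum_compl_singleton (hi : i ∉ T) (a : Finset (Fin n) → ℝ) :
    DependsOn (walshSum T a) {i}ᶜ :=
  (dependsOn_walshSum T a).mono (Set.subset_compl_singleton_iff.2 (mem_coe.not.2 hi))

lemma walshSum_insert (hi : i ∉ T) (a : Finset (Fin n) → ℝ) (x : Fin n → Bool) :
    walshSum (insert i T) a x =
      walshSum T a x + walsh {i} x * walshSum T (fun S => a (insert i S)) x := by
  rw [walshSum, sum_powerset_insert hi, walshSum, walshSum, mul_sum]
  refine congrArg _ (sum_congr rfl fun S hS => ?_)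
  rw [walsh_insert fun h => hi (mem_powerset.1 hS h), mul_left_comm]

lemma expect_walshSum_sq (T : Finset (Fin n)) (a : Finset (Fin n) → ℝ) :
    𝔼 x, walshSum T a x ^ 2 = ∑ S ∈ T.powerset, a S ^ 2 := by
  induction T using Finset.induction_on generalizing a with
  | empty => simp [walshSum, walsh]
  | insert i T hi ih =>
    simp only [walshSum_insert hi]
    rw [expect_add_walsh_mul_sq (mem_singleton_self i) (dependsOn_walshSum_compl_singleton hi _)
      (dependsOn_walshSum_compl_singleton hi _), ih, ih, sum_powerset_insert hi]

lemma expect_walshSum_pow_four_le (T : Finset (Fin n)) (k : ℕ) (a : Finset (Fin n) → ℝ)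
    (ha : ∀ S ⊆ T, k < #S → a S = 0) :
    𝔼 x, walshSum T a x ^ 4 ≤ 9 ^ k * (𝔼 x, walshSum T a x ^ 2) ^ 2 := by
  induction T using Finset.induction_on generalizing k a with
  | empty =>
    have hconst (x : Fin n → Bool) : walshSum ∅ a x = a ∅ := by simp [walshSum, walsh]
    simp only [hconst, Fintype.expect_const, ← pow_mul, Nat.reduceMul]
    exact le_mul_of_one_le_left (by positivity) (one_le_pow₀ (by norm_num))
  | insert i T hi ih =>
    have hg := ih k a fun S hS => ha S (hS.trans (subset_insert i T))
    have ha_insert : ∀ S ⊆ T, k < #S + 1 → a (insert i S) = 0 := fun S hS hk =>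
      ha _ (insert_subset_insert i hS) (by rwa [card_insert_of_notMem fun h => hi (hS h)])
    simp only [walshSum_insert hi]
    cases k with
    | zero =>
      have hh (x : Fin n → Bool) : walshSum T (fun S => a (insert i S)) x = 0 :=
        sum_eq_zero fun S hS => by
          simp only [ha_insert S (mem_powerset.1 hS) (Nat.succ_pos _), zero_mul]
      simpa only [hh, mul_zero, add_zero] using hg
    | succ j =>
      have hh := ih j (fun S => a (insert i S)) fun S hS hj =>
        ha_insert S hS (Nat.succ_lt_succ hj)
      rw [pow_succ'] at hg ⊢
      exact expect_add_walsh_mul_pow_four_le (mem_singleton_self i)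
        (dependsOn_walshSum_compl_singleton hi _) (dependsOn_walshSum_compl_singleton hi _)
        (by positivity) hg hh

end Walsh

section Fourier

variable {n : ℕ} {f : (Fin n → Bool) → ℝ}

lemma walshSum_univ_cubeFourier (f : (Fin n → Bool) → ℝ) :
    walshSum univ (cubeFourier f) = f := by
  ext x
  calc walshSum univ (cubeFourier f) x
      = ∑ S, (∑ y, f y * walsh S y) / 2 ^ n * walsh S x := by
        rw [walshSum, powerset_univ]
        rfl
    _ = (∑ y, f y * ∑ S, walsh S y * walsh S x) / 2 ^ n := by
        simp only [div_mul_eq_mul_div, sum_mul, ← sum_div, mul_sum, mul_assoc]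
        rw [sum_comm]
    _ = f x := by simp [sum_walsh_mul_walsh]

lemma expect_sq_eq_sum_cubeFourier_sq (f : (Fin n → Bool) → ℝ) :
    𝔼 x, f x ^ 2 = ∑ S, cubeFourier f S ^ 2 := by
  simpa only [walshSum_univ_cubeFourier, powerset_univ] using
    expect_walshSum_sq univ (cubeFourier f)

lemma expect_heat1_sq (t : ℝ) (f : (Fin n → Bool) → ℝ) :
    𝔼 x, heat1 t f x ^ 2 = ∑ S, (exp (-t * #S) * cubeFourier f S) ^ 2 := by
  rw [← powerset_univ, ← expect_walshSum_sq]
  simp only [walshSum, powerset_univ, heat1]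

lemma expect_pow_four_le_of_cubeFourier_eq_zero {k : ℕ}
    (hf : ∀ S, k < #S → cubeFourier f S = 0) :
    𝔼 x, f x ^ 4 ≤ 9 ^ k * (𝔼 x, f x ^ 2) ^ 2 := by
  simpa only [walshSum_univ_cubeFourier] using
    expect_walshSum_pow_four_le univ k (cubeFourier f) fun S _ => hf S

lemma pNorm_two_le_three_pow_mul_pNorm_one {k : ℕ} (hf : ∀ S, k < #S → cubeFourier f S = 0) :
    pNorm 2 f ≤ 3 ^ k * pNorm 1 f := by
  have hinterp := expect_sq_pow_three_le univ f
  have hfour := expect_pow_four_le_of_cubeFourier_eq_zero hf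
  rw [← pNorm_one, ← pNorm_two_sq] at hinterp
  rw [← pNorm_two_sq] at hfour
  have hone := pNorm_nonneg 1 f
  have hnine : (9 : ℝ) ^ k = (3 ^ k) ^ 2 := by
    rw [pow_right_comm]
    norm_num
  rcases (pNorm_nonneg 2 f).eq_or_lt with hzero | hpos
  · rw [← hzero]
    positivity
  refine le_of_sq_le_sq (le_of_mul_le_mul_left ?_ (pow_pos hpos 4)) (by positivity)
  calc pNorm 2 f ^ 4 * pNorm 2 f ^ 2
      = (pNorm 2 f ^ 2) ^ 3 := by ring
    _ ≤ pNorm 1 f ^ 2 * 𝔼 x, f x ^ 4 := hinterp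
    _ ≤ pNorm 1 f ^ 2 * (9 ^ k * (pNorm 2 f ^ 2) ^ 2) := by gcongr
    _ = pNorm 2 f ^ 4 * (3 ^ k * pNorm 1 f) ^ 2 := by
        rw [hnine]
        ring

lemma pNorm_two_heat1_le {t : ℝ} (ht : 0 ≤ t) {d : ℕ} (hf : ∀ S, #S < d → cubeFourier f S = 0) :
    pNorm 2 (heat1 t f) ≤ exp (-t * d) * pNorm 2 f := by
  have hexp := exp_nonneg (-t * d)
  refine le_of_sq_le_sq ?_ (mul_nonneg hexp (pNorm_nonneg 2 f))
  rw [mul_pow, pNorm_two_sq, pNorm_two_sq, expect_heat1_sq, expect_sq_eq_sum_cubeFourier_sq,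
    mul_sum]
  refine sum_le_sum fun S _ => ?_
  rw [mul_pow]
  rcases lt_or_ge #S d with hlow | hhigh
  · simp only [hf S hlow, zero_pow two_ne_zero, mul_zero, le_refl]
  · have hrate : -t * #S ≤ -t * d :=
      mul_le_mul_of_nonpos_left (Nat.cast_le.2 hhigh) (neg_nonpos.2 ht)
    gcongr

end Fourier

theorem stmt8_general (k n : ℕ) (f : (Fin n → Bool) → ℝ) (h0 : cubeFourier f ∅ = 0)
    (hband : ∀ S : Finset (Fin n), k < #S → cubeFourier f S = 0)
    (t : ℝ) (ht : 2 * k * log 3 ≤ t) :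
    pNorm 2 (heat1 t f) ≤ exp (-t / 2) * pNorm 1 f := by
  have ht_nonneg : 0 ≤ t := le_trans (by positivity) ht
  have hlow : ∀ S : Finset (Fin n), #S < 1 → cubeFourier f S = 0 := fun S hS => by
    rwa [card_eq_zero.1 (Nat.lt_one_iff.1 hS)]
  have hthree : (3 : ℝ) ^ k ≤ exp (t / 2) := by
    rw [← exp_log (by norm_num : (0 : ℝ) < 3), ← exp_nat_mul]
    exact exp_le_exp.2 (by linarith)
  have hone := pNorm_nonneg 1 f
  calc pNorm 2 (heat1 t f)
      ≤ exp (-t) * pNorm 2 f := by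
        simpa only [Nat.cast_one, mul_one] using pNorm_two_heat1_le ht_nonneg hlow
    _ ≤ exp (-t) * (3 ^ k * pNorm 1 f) := by
        gcongr
        exact pNorm_two_le_three_pow_mul_pNorm_one hband
    _ ≤ exp (-t) * (exp (t / 2) * pNorm 1 f) := by gcongr
    _ = exp (-t / 2) * pNorm 1 f := by
        rw [← mul_assoc, ← exp_add]
        ring_nf

/-- Heat smoothing for band-limited functions: if `f : C_n → ℝ` has `f̂(∅) = 0`
and `f̂(S) = 0` for `|S| > k` (`k ≥ 1`), then for every `t ≥ 3k log 3`,
`‖e^{tΔ} f‖₁ ≤ e^{-t/2} ‖f‖₁`. -/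
theorem stmt8 (k : ℕ) (hk : 1 ≤ k) (n : ℕ) (f : (Fin n → Bool) → ℝ)
    (h0 : cubeFourier f ∅ = 0)
    (hband : ∀ S : Finset (Fin n), k < S.card → cubeFourier f S = 0)
    (t : ℝ) (ht : 3 * (k : ℝ) * Real.log 3 ≤ t) :
    pNorm 1 (heat1 t f) ≤ Real.exp (-t / 2) * pNorm 1 f :=
  (pNorm_one_le_pNorm_two _).trans <| stmt8_general k n f h0 hband t <| ht.trans' <| by
    gcongr
    norm_num
end
end

section
/- For every real number x, e^{−|x|} = (1/(2√π)) · ∫₀^∞ e^{−τ x²} · τ^{−3/2} · e^{−1/(4τ)} dτ. -/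
open MeasureTheory Real

/-!
The substitution `τ = u⁻²` turns the integral into `2 ∫₀^∞ exp (-(u² / 4 + x² / u²)) du`. Completing
the square gives `u² / 4 + x² / u² = (u - 2|x| / u)² / 4 + |x|`, and by the Cauchy–Schlömilch
transformation `∫₀^∞ f (u - b / u) du = ∫₀^∞ f u du`, for even `f`, what remains is a Gaussian
integral.

The transformation itself holds because `u ↦ u - b / u` maps `(0, ∞)` bijectively onto `ℝ` with
derivative `1 + b / u²`, while the involution `u ↦ b / u` of `(0, ∞)` only changes the sign of
`u - b / u`: the two summands of the derivative contribute equally to `∫ f`.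
-/

open Set

section CauchySchlomilch

variable {E : Type*} [NormedAddCommGroup E] [NormedSpace ℝ E] {b : ℝ} {f : ℝ → E}

lemma hasDerivAt_sub_const_div (b : ℝ) {u : ℝ} (hu : u ≠ 0) :
    HasDerivAt (fun u ↦ u - b / u) (1 + b / u ^ 2) u := by
  have h := (hasDerivAt_id' u).sub ((hasDerivAt_inv hu).const_mul b)
  exact h.congr_deriv (by ring)

lemma monotoneOn_sub_const_div (hb : 0 ≤ b) : MonotoneOn (fun u ↦ u - b / u) (Ioi 0) :=
  fun _ hu _ _ huv ↦ sub_le_sub huv (div_le_div_of_nonneg_left hb hu huv)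

lemma image_sub_const_div_Ioi (hb : 0 < b) : (fun u ↦ u - b / u) '' Ioi 0 = univ := by
  refine eq_univ_of_forall fun y ↦ ?_
  have hsq : √(y ^ 2 + 4 * b) ^ 2 = y ^ 2 + 4 * b := sq_sqrt (by positivity)
  have hlt : |y| < √(y ^ 2 + 4 * b) := lt_sqrt_of_sq_lt (by rw [sq_abs]; linarith)
  have hpos : 0 < y + √(y ^ 2 + 4 * b) := by linarith [neg_abs_le y]
  -- The positive root of `u ^ 2 - y * u - b = 0`.
  refine ⟨(y + √(y ^ 2 + 4 * b)) / 2, half_pos hpos, ?_⟩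
  field_simp
  linear_combination hsq

lemma integrableOn_Ioi_deriv_smul_comp_sub_const_div (hb : 0 ≤ b) (hf : Integrable f) :
    IntegrableOn (fun u ↦ (1 + b / u ^ 2) • f (u - b / u)) (Ioi 0) := by
  refine (integrableOn_image_iff_integrableOn_deriv_smul_of_monotoneOn measurableSet_Ioi
    (fun u hu ↦ (hasDerivAt_sub_const_div b (ne_of_gt hu)).hasDerivWithinAt)
    (monotoneOn_sub_const_div hb) f).1 ?_
  exact hf.integrableOn

lemma integral_Ioi_deriv_smul_comp_sub_const_div (hb : 0 < b) (f : ℝ → E) :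
    ∫ u in Ioi 0, (1 + b / u ^ 2) • f (u - b / u) = ∫ y, f y := by
  rw [← setIntegral_univ (f := f), ← image_sub_const_div_Ioi hb]
  exact (integral_image_eq_integral_deriv_smul_of_monotoneOn measurableSet_Ioi
    (fun u hu ↦ (hasDerivAt_sub_const_div b (ne_of_gt hu)).hasDerivWithinAt)
    (monotoneOn_sub_const_div hb.le) f).symm

lemma integrableOn_Ioi_comp_sub_const_div (hb : 0 ≤ b) (hf : Integrable f) :
    IntegrableOn (fun u ↦ f (u - b / u)) (Ioi 0) := by
  have hbound (u : ℝ) : ‖(1 + b / u ^ 2)⁻¹‖ ≤ 1 := by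
    have : 1 ≤ 1 + b / u ^ 2 := le_add_of_nonneg_right (by positivity)
    rw [norm_of_nonneg (by positivity)]
    exact inv_le_one_of_one_le₀ this
  have h : IntegrableOn (fun u ↦ (1 + b / u ^ 2)⁻¹ • (1 + b / u ^ 2) • f (u - b / u)) (Ioi 0) :=
    (integrableOn_Ioi_deriv_smul_comp_sub_const_div hb hf).bdd_smul 1
      (by fun_prop : Measurable fun u : ℝ ↦ (1 + b / u ^ 2)⁻¹).aestronglyMeasurable
      (ae_of_all _ hbound)
  refine h.congr_fun (fun u _ ↦ ?_) measurableSet_Ioi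
  exact inv_smul_smul₀ (by positivity) _

lemma integral_Ioi_comp_const_div (hb : 0 < b) (g : ℝ → E) :
    ∫ u in Ioi 0, (b / u ^ 2) • g (b / u) = ∫ u in Ioi 0, g u := by
  calc ∫ u in Ioi 0, (b / u ^ 2) • g (b / u)
      = ∫ u in Ioi 0, b • (|(-1 : ℝ)| * u ^ (-1 - 1 : ℝ)) • g (b * u ^ (-1 : ℝ)) := by
        refine setIntegral_congr_fun measurableSet_Ioi fun u hu ↦ ?_
        have hpow : u ^ (-1 - 1 : ℝ) = (u ^ 2)⁻¹ := by
          rw [← rpow_natCast, ← rpow_neg (le_of_lt hu)]; norm_num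
        simp only [hpow, rpow_neg_one, smul_smul, abs_neg, abs_one, one_mul, div_eq_mul_inv]
    _ = b • ∫ u in Ioi 0, g (b * u) := by
        rw [integral_smul, integral_comp_rpow_Ioi (fun u ↦ g (b * u)) (by norm_num)]
    _ = ∫ u in Ioi 0, g u := by
        rw [integral_comp_mul_left_Ioi' g 0 hb, mul_zero]

lemma integral_eq_two_smul_integral_Ioi_of_even (hf : f.Even) (hfi : Integrable f) :
    ∫ x, f x = (2 : ℝ) • ∫ x in Ioi 0, f x := by
  have hIic : ∫ x in Iic 0, f x = ∫ x in Ioi 0, f x := by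
    simpa [hf _] using (integral_comp_neg_Ioi 0 f).symm
  rw [← intervalIntegral.integral_Iic_add_Ioi hfi.integrableOn hfi.integrableOn, hIic, two_smul]

theorem integral_Ioi_comp_sub_const_div (hb : 0 ≤ b) (hf : f.Even) (hfi : Integrable f) :
    ∫ u in Ioi 0, f (u - b / u) = ∫ u in Ioi 0, f u := by
  obtain rfl | hb := hb.eq_or_lt
  · simp only [zero_div, sub_zero]
  have hint := integrableOn_Ioi_comp_sub_const_div hb.le hfi
  have hint' : IntegrableOn (fun u ↦ (b / u ^ 2) • f (u - b / u)) (Ioi 0) := by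
    refine ((integrableOn_Ioi_deriv_smul_comp_sub_const_div hb.le hfi).sub hint).congr_fun
      (fun u _ ↦ ?_) measurableSet_Ioi
    simp only [Pi.sub_apply, add_smul, one_smul, add_sub_cancel_left]
  have hsymm : ∫ u in Ioi 0, (b / u ^ 2) • f (u - b / u) = ∫ u in Ioi 0, f (u - b / u) := by
    rw [← integral_Ioi_comp_const_div hb fun u ↦ f (u - b / u)]
    refine setIntegral_congr_fun measurableSet_Ioi fun u _ ↦ ?_
    simp only [div_div_cancel₀ hb.ne', ← hf (u - b / u), neg_sub]
  have htwo : (2 : ℝ) • ∫ u in Ioi 0, f (u - b / u) = (2 : ℝ) • ∫ u in Ioi 0, f u :=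
    calc (2 : ℝ) • ∫ u in Ioi 0, f (u - b / u)
        = (∫ u in Ioi 0, f (u - b / u)) + ∫ u in Ioi 0, (b / u ^ 2) • f (u - b / u) := by
          rw [hsymm, two_smul]
      _ = ∫ u in Ioi 0, (1 + b / u ^ 2) • f (u - b / u) := by
          simp only [add_smul, one_smul, integral_add hint hint']
      _ = ∫ y, f y := integral_Ioi_deriv_smul_comp_sub_const_div hb f
      _ = (2 : ℝ) • ∫ u in Ioi 0, f u := integral_eq_two_smul_integral_Ioi_of_even hf hfi
  exact smul_right_injective E two_ne_zero htwo

end CauchySchlomilch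

lemma mul_sq_add_div_sq_eq {p q u : ℝ} (hp : 0 < p) (hq : 0 ≤ q) (hu : u ≠ 0) :
    p * u ^ 2 + q / u ^ 2 = p * (u - √(q / p) / u) ^ 2 + 2 * √(p * q) := by
  have hsq : p * √(q / p) ^ 2 = q := by
    rw [sq_sqrt (by positivity), mul_div_cancel₀ q hp.ne']
  have hmul : √(p * q) = p * √(q / p) := by
    rw [sqrt_eq_iff_mul_self_eq (by positivity) (by positivity)]
    linear_combination -p * hsq
  rw [hmul]
  field_simp
  linear_combination -hsq

theorem integral_Ioi_exp_neg_mul_sq_add_div_sq {p q : ℝ} (hp : 0 < p) (hq : 0 ≤ q) :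
    ∫ u in Ioi 0, exp (-(p * u ^ 2 + q / u ^ 2)) = √(π / p) / 2 * exp (-2 * √(p * q)) := by
  have heven : (fun u : ℝ ↦ exp (-p * u ^ 2)).Even := fun u ↦ by simp only [neg_sq]
  calc ∫ u in Ioi 0, exp (-(p * u ^ 2 + q / u ^ 2))
      = ∫ u in Ioi 0, exp (-p * (u - √(q / p) / u) ^ 2) * exp (-2 * √(p * q)) := by
        refine setIntegral_congr_fun measurableSet_Ioi fun u hu ↦ ?_
        simp only [mul_sq_add_div_sq_eq hp hq (ne_of_gt hu), ← exp_add]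
        ring_nf
    _ = √(π / p) / 2 * exp (-2 * √(p * q)) := by
        rw [integral_mul_const, ← integral_gaussian_Ioi]
        congr 1
        exact integral_Ioi_comp_sub_const_div (sqrt_nonneg _) heven (integrable_exp_neg_mul_sq hp)

theorem integral_Ioi_exp_neg_mul_mul_rpow_mul_exp_neg_div {a b : ℝ} (ha : 0 ≤ a) (hb : 0 < b) :
    ∫ τ in Ioi 0, exp (-τ * a) * τ ^ (-(3 : ℝ) / 2) * exp (-b / τ)
      = √(π / b) * exp (-2 * √(b * a)) := by
  rw [← integral_comp_rpow_Ioi _ (by norm_num : (-2 : ℝ) ≠ 0)]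
  calc
    _ = ∫ u in Ioi 0, 2 * exp (-(b * u ^ 2 + a / u ^ 2)) := by
        refine setIntegral_congr_fun measurableSet_Ioi fun u (hu : 0 < u) ↦ ?_
        have hsub : u ^ (-2 : ℝ) = (u ^ 2)⁻¹ := by rw [rpow_neg hu.le, rpow_two]
        have hjac : u ^ (-2 - 1 : ℝ) * (u ^ (-2 : ℝ)) ^ (-(3 : ℝ) / 2) = 1 := by
          rw [← rpow_mul hu.le, ← rpow_add hu]; norm_num
        have hexp : exp (-(u ^ 2)⁻¹ * a) * exp (-b / (u ^ 2)⁻¹)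
            = exp (-(b * u ^ 2 + a / u ^ 2)) := by
          rw [← exp_add, div_inv_eq_mul]; ring_nf
        rw [smul_eq_mul, ← hexp, ← hsub, abs_of_neg (by norm_num)]
        linear_combination 2 * exp (-u ^ (-2 : ℝ) * a) * exp (-b / u ^ (-2 : ℝ)) * hjac
    _ = √(π / b) * exp (-2 * √(b * a)) := by
        rw [integral_const_mul, integral_Ioi_exp_neg_mul_sq_add_div_sq hb ha]
        ring

/-- Explicit subordination formula for `γ = 1/2`: for every real `x`,
`e^{-|x|} = (1/(2√π)) ∫₀^∞ e^{-τx²} τ^{-3/2} e^{-1/(4τ)} dτ`. -/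
theorem stmt12 (x : ℝ) :
    Real.exp (-|x|) =
      (1 / (2 * Real.sqrt π)) *
        ∫ τ in Set.Ioi (0 : ℝ),
          Real.exp (-τ * x ^ 2) * τ ^ (-(3 : ℝ) / 2) * Real.exp (-1 / (4 * τ)) := by
  have hdiv (τ : ℝ) : -1 / (4 * τ) = -(1 / 4) / τ := by ring
  have hsqrt : √(1 / 4 * x ^ 2) = |x| / 2 := by
    rw [← sqrt_sq_eq_abs, ← sqrt_sq (zero_le_two (α := ℝ)), ← sqrt_div (sq_nonneg x)]
    ring_nf
  have hpi : √(π / (1 / 4)) = 2 * √π := by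
    rw [show π / (1 / 4) = 2 ^ 2 * π by ring, sqrt_mul (by positivity), sqrt_sq zero_le_two]
  simp only [hdiv]
  rw [integral_Ioi_exp_neg_mul_mul_rpow_mul_exp_neg_div (sq_nonneg x) (by norm_num), hsqrt, hpi]
  field_simp
end

section
/- Let 0 < γ < 1. There exist constants t₀ ∈ (0,1) and c₀ > 0, depending only on γ, such that for every n ∈ ℕ and every t with 0 < t ≤ t₀, there exists a function K̃ : C_n → ℝ satisfying: (i) K̃(x) ≥ 0 for all x ∈ C_n; (ii) E|K̃| ≤ e^{−c₀ t}; and (iii) the Fourier coefficients of K̃ satisfy K̃^(S) = e^{−t|S|^γ} for every S ⊆ {1,…,n} with 1 ≤ |S| ≤ 2. -/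
open Finset MeasureTheory Real

noncomputable section

/-!
On levels `1` and `2` the two numbers `e^{-t}` and `e^{-2^γ t}` are interpolated by a geometric
progression `w r^{|S|}`, with `w = e^{-(2 - 2^γ) t}` and `r = e^{-(2^γ - 1) t} ≤ 1`. Such a
progression is the Fourier transform of `w ∏ i, (1 + r x_i)`, which is nonnegative and therefore
has `L¹` norm equal to its zeroth coefficient `w`; this is less than `1` because `2^γ < 2`.
-/

section RieszProduct

variable {n : ℕ}

lemma cubeE_prod (f : Fin n → Bool → ℝ) :
    cubeE (fun x => ∏ i, f i (x i)) = ∏ i, (f i true + f i false) / 2 := by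
  rw [cubeE, ← Fintype.prod_sum f, Finset.prod_div_distrib, Fin.prod_const]
  simp only [Fintype.sum_bool]

lemma cubeFourier_empty (f : (Fin n → Bool) → ℝ) : cubeFourier f ∅ = cubeE f := by
  simp only [cubeFourier, walsh, Finset.prod_empty, mul_one]

lemma cubeFourier_const_mul (c : ℝ) (f : (Fin n → Bool) → ℝ) (S : Finset (Fin n)) :
    cubeFourier (fun x => c * f x) S = c * cubeFourier f S := by
  simp only [cubeFourier, cubeE, mul_assoc, ← Finset.mul_sum, mul_div_assoc]

/-- The Riesz product `∏ i, (1 + a_i x_i)` on the Hamming cube, the density of a product measure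
when all `|a_i| ≤ 1`. As in `walsh`, the coordinate `x_i = ±1` is encoded by a Boolean. -/
def rieszProduct (a : Fin n → ℝ) (x : Fin n → Bool) : ℝ :=
  ∏ i, (1 + a i * if x i then 1 else -1)

lemma rieszProduct_nonneg {a : Fin n → ℝ} (ha : ∀ i, |a i| ≤ 1) (x : Fin n → Bool) :
    0 ≤ rieszProduct a x := by
  refine Finset.prod_nonneg fun i _ => ?_
  obtain ⟨h_lower, h_upper⟩ := abs_le.mp (ha i)
  split_ifs <;> linarith

lemma cubeFourier_rieszProduct (a : Fin n → ℝ) (S : Finset (Fin n)) :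
    cubeFourier (rieszProduct a) S = ∏ i ∈ S, a i := by
  let f (i : Fin n) (b : Bool) : ℝ :=
    (1 + a i * if b then 1 else -1) * if i ∈ S then (if b then 1 else -1) else 1
  have h_prod (x : Fin n → Bool) : rieszProduct a x * walsh S x = ∏ i, f i (x i) := by
    rw [rieszProduct, walsh, Finset.prod_mul_distrib, Finset.prod_ite_mem, Finset.univ_inter]
  have h_mean (i : Fin n) : (f i true + f i false) / 2 = if i ∈ S then a i else 1 := by
    by_cases hi : i ∈ S <;> simp [f, hi] <;> ring
  simp only [cubeFourier, h_prod, cubeE_prod, h_mean, Finset.prod_ite_mem, Finset.univ_inter]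

end RieszProduct

lemma exists_nonneg_cubeFourier_eq_mul_pow (n : ℕ) {w r : ℝ} (hw : 0 ≤ w) (hr : |r| ≤ 1) :
    ∃ K : (Fin n → Bool) → ℝ,
      (∀ x, 0 ≤ K x) ∧ cubeE (fun x => |K x|) = w ∧ ∀ S, cubeFourier K S = w * r ^ S.card := by
  let K (x : Fin n → Bool) : ℝ := w * rieszProduct (fun _ => r) x
  have hK (x) : 0 ≤ K x := mul_nonneg hw (rieszProduct_nonneg (fun _ => hr) x)
  have hF (S) : cubeFourier K S = w * r ^ S.card := by
    rw [cubeFourier_const_mul, cubeFourier_rieszProduct, Finset.prod_const]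
  refine ⟨K, hK, ?_, hF⟩
  calc cubeE (fun x => |K x|) = cubeE K := by simp only [abs_of_nonneg (hK _)]
    _ = cubeFourier K ∅ := (cubeFourier_empty K).symm
    _ = w := by rw [hF, Finset.card_empty, pow_zero, mul_one]

lemma exp_mul_exp_pow_eq_exp_neg_mul_rpow (γ t : ℝ) {k : ℕ} (hk1 : 1 ≤ k) (hk2 : k ≤ 2) :
    exp (-(2 - 2 ^ γ) * t) * exp (-(2 ^ γ - 1) * t) ^ k = exp (-t * (k : ℝ) ^ γ) := by
  rw [← exp_nat_mul, ← exp_add, exp_eq_exp]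
  obtain rfl | rfl : k = 1 ∨ k = 2 := by omega
  · rw [Nat.cast_one, one_rpow]
    ring
  · rw [Nat.cast_ofNat]
    ring

theorem stmt13_general (γ : ℝ) (hγ : 0 ≤ γ) (n : ℕ) (t : ℝ) (ht : 0 ≤ t) :
    ∃ K : (Fin n → Bool) → ℝ,
      (∀ x, 0 ≤ K x) ∧
      cubeE (fun x => |K x|) = Real.exp (-(2 - 2 ^ γ) * t) ∧
      ∀ S : Finset (Fin n), 1 ≤ S.card → S.card ≤ 2 →
        cubeFourier K S = Real.exp (-t * (S.card : ℝ) ^ γ) := by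
  have h_one_le : (1 : ℝ) ≤ 2 ^ γ := one_le_rpow one_le_two hγ
  have hr : |exp (-(2 ^ γ - 1) * t)| ≤ 1 := by
    rw [abs_exp, exp_le_one_iff, neg_mul, neg_nonpos]
    exact mul_nonneg (sub_nonneg.mpr h_one_le) ht
  obtain ⟨K, hK, hE, hF⟩ :=
    exists_nonneg_cubeFourier_eq_mul_pow n (exp_nonneg (-(2 - 2 ^ γ) * t)) hr
  refine ⟨K, hK, hE, fun S hS1 hS2 => ?_⟩
  rw [hF, exp_mul_exp_pow_eq_exp_neg_mul_rpow γ t hS1 hS2]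

/-- Modification of the fractional heat kernel: for `0 < γ < 1` there exist
`t₀ ∈ (0,1)` and `c₀ > 0` depending only on `γ` such that for every `n` and
every `0 < t ≤ t₀` there is a function `K̃ : C_n → ℝ` with `K̃ ≥ 0`,
`E|K̃| ≤ e^{-c₀ t}`, and `K̃^(S) = e^{-t|S|^γ}` whenever `1 ≤ |S| ≤ 2`. -/
theorem stmt13 (γ : ℝ) (hγ0 : 0 < γ) (hγ1 : γ < 1) :
    ∃ t₀ ∈ Set.Ioo (0 : ℝ) 1, ∃ c₀ : ℝ, 0 < c₀ ∧
      ∀ (n : ℕ) (t : ℝ), 0 < t → t ≤ t₀ →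
        ∃ K : (Fin n → Bool) → ℝ,
          (∀ x, 0 ≤ K x) ∧
          cubeE (fun x => |K x|) ≤ Real.exp (-c₀ * t) ∧
          ∀ S : Finset (Fin n), 1 ≤ S.card → S.card ≤ 2 →
            cubeFourier K S = Real.exp (-t * (S.card : ℝ) ^ γ) := by
  refine ⟨1 / 2, by norm_num, 2 - 2 ^ γ, sub_pos.mpr (rpow_lt_self_of_one_lt one_lt_two hγ1),
    fun n t ht _ => ?_⟩
  obtain ⟨K, hK, hE, hF⟩ := stmt13_general γ hγ0.le n t ht.le
  exact ⟨K, hK, hE.le, hF⟩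
end
end
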